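/- For every constant a ≥ 1 there exists a constant C₃ > 1 such that for every positive integer n there exists a piecewise smooth homeomorphism f₃ : P(3) → P(3) satisfying: f₃(P(1/(100an))) = P(2); f₃(G) = G; (1) f₃ is a (C₃n)-Lipschitz map; (2) f₃⁻¹ is a C₃-Lipschitz map; (3) f₃ restricts to the identity on ∂_ver P(3). -/

import Mathlib

noncomputable section

open Set Metric

/-- Euclidean 3-space. -/
abbrev R3 : Type := EuclideanSpace ℝ (Fin 3)

/-- The point `(a, b, c)` of `ℝ³`. -/
noncomputable def mk3 (a b c : ℝ) : R3 := (WithLp.equiv 2 (Fin 3 → ℝ)).symm ![a, b, c]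

/-- The `Y`-shaped solid `P(r) ⊂ ℝ³`. -/
def Pset (r : ℝ) : Set R3 :=
  {p | ((p 0) ^ 2 + (p 1) ^ 2 ≤ r ^ 2 ∧ 0 ≤ p 2 ∧ p 2 ≤ 8) ∨
       ((p 0) ^ 2 + (p 1 + p 2) ^ 2 ≤ r ^ 2 ∧ -8 ≤ p 2 ∧ p 2 ≤ 0) ∨
       ((p 0) ^ 2 + (p 1 - p 2) ^ 2 ≤ r ^ 2 ∧ -8 ≤ p 2 ∧ p 2 ≤ 0)}

/-- The closed horizontal `r`-neighborhood `N^hor_r(S)` of a subset `S ⊂ ℝ³`. -/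
def Nhor (r : ℝ) (S : Set R3) : Set R3 :=
  {p | ∃ q ∈ S, q 2 = p 2 ∧ (p 0 - q 0) ^ 2 + (p 1 - q 1) ^ 2 ≤ r ^ 2}

/-- The `Y`-shaped graph `G = ⋂_{r>0} P(r)`. -/
def Ggraph : Set R3 :=
  {p | (p 0 = 0 ∧ p 1 = 0 ∧ 0 ≤ p 2 ∧ p 2 ≤ 8) ∨
       (∃ ε : ℝ, (ε = 1 ∨ ε = -1) ∧
         p 0 = 0 ∧ p 1 = ε * p 2 ∧ -8 ≤ p 2 ∧ p 2 ≤ 0)}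

/-- The perturbed `Y`-shaped graph `G' ⊂ P(3)` (depending on the positive integer `n`). -/
def Ggraph' (n : ℕ) : Set R3 :=
  {p | (p 0 = 0 ∧ p 1 = 0 ∧ 0 ≤ p 2 ∧ p 2 ≤ 8) ∨
       (∃ ε : ℝ, (ε = 1 ∨ ε = -1) ∧
         p 0 = ε * p 2 ∧ p 1 = 0 ∧ -(1 / (10 * (n : ℝ))) ≤ p 2 ∧ p 2 ≤ 0) ∨
       (∃ ε : ℝ, (ε = 1 ∨ ε = -1) ∧
         p 0 = -ε / (10 * (n : ℝ)) ∧ p 1 = ε * (p 2 + 1 / (10 * (n : ℝ))) ∧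
         -8 ≤ p 2 ∧ p 2 ≤ -(1 / (10 * (n : ℝ))))}

/-- Horizontal translation of a subset of `ℝ³` by the vector `(a, b, 0)`. -/
def translateH (a b : ℝ) (S : Set R3) : Set R3 :=
  {p | ∃ q ∈ S, p 0 = q 0 + a ∧ p 1 = q 1 + b ∧ p 2 = q 2}

/-- The translate `G'_{i,j}` of `G'` by the horizontal vector `(i/n, j/n, 0)`. -/
def Gij (n : ℕ) (i j : ℤ) : Set R3 :=
  translateH ((i : ℝ) / (n : ℝ)) ((j : ℝ) / (n : ℝ)) (Ggraph' n)

/-- (The interior of) the horizontal boundary disk `D₁` of `P(3)`. -/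
def D1int : Set R3 := {p | p 2 = 8 ∧ (p 0) ^ 2 + (p 1) ^ 2 < 9}

/-- (The interior of) the horizontal boundary disk `D₂` of `P(3)`. -/
def D2int : Set R3 := {p | p 2 = -8 ∧ (p 0) ^ 2 + (p 1 - 8) ^ 2 < 9}

/-- (The interior of) the horizontal boundary disk `D₃` of `P(3)`. -/
def D3int : Set R3 := {p | p 2 = -8 ∧ (p 0) ^ 2 + (p 1 + 8) ^ 2 < 9}

/-- The vertical boundary `∂_ver P(3)`: the boundary of `P(3)` minus the interiors of the
three horizontal disks `D₁, D₂, D₃`. -/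
def verBoundary : Set R3 := frontier (Pset 3) \ (D1int ∪ D2int ∪ D3int)

end

noncomputable section

/-- Signed horizontal offset from the graph (after folding `y ↦ |y|`). -/
def Wc (y z : ℝ) : ℝ := |y| - max (-z) 0

/-- Horizontal distance to the graph. -/
def Rc (x y z : ℝ) : ℝ := √(x ^ 2 + Wc y z ^ 2)

/-- Radial scaling factor. -/
def lamc (φ : ℝ → ℝ) (x y z : ℝ) : ℝ := φ (Rc x y z) / Rc x y z

/-- New height. -/
def Zc (φ : ℝ → ℝ) (x y z : ℝ) : ℝ :=
  -8 + (z + 8) * ((min (lamc φ x y z * Wc y z) 0 + 8) / (min (Wc y z) 0 + 8))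

/-- New absolute value of `y`. -/
def Yc (φ : ℝ → ℝ) (x y z : ℝ) : ℝ := lamc φ x y z * Wc y z + max (-(Zc φ x y z)) 0

/-- The stretch map. -/
def Fmap (φ : ℝ → ℝ) (p : R3) : R3 :=
  mk3 (lamc φ (p 0) (p 1) (p 2) * p 0) (p 1 / |p 1| * Yc φ (p 0) (p 1) (p 2))
    (Zc φ (p 0) (p 1) (p 2))

/-- Admissible radial profiles. -/
structure Good (φ : ℝ → ℝ) (L : ℝ) : Prop where
  zero : φ 0 = 0
  three : φ 3 = 3
  one_le : 1 ≤ L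
  pos : ∀ s, 0 < s → s ≤ 3 → 0 < φ s
  le3 : ∀ s, 0 ≤ s → s ≤ 3 → φ s ≤ 3
  lip : ∀ s t, 0 ≤ s → s ≤ 3 → 0 ≤ t → t ≤ 3 → |φ s - φ t| ≤ L * |s - t|

/-- The domain in coordinates. -/
structure Dom (x y z : ℝ) : Prop where
  r : Rc x y z ≤ 3
  lo : -8 ≤ z
  hi : z ≤ 8

@[simp] lemma mk3_0 (a b c : ℝ) : (mk3 a b c) 0 = a := by simp [mk3]
@[simp] lemma mk3_1 (a b c : ℝ) : (mk3 a b c) 1 = b := by simp [mk3]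
@[simp] lemma mk3_2 (a b c : ℝ) : (mk3 a b c) 2 = c := by simp [mk3]

lemma R3_ext {p q : R3} (h0 : p 0 = q 0) (h1 : p 1 = q 1) (h2 : p 2 = q 2) : p = q := by
  ext i; fin_cases i <;> assumption

lemma Rc_nonneg (x y z : ℝ) : 0 ≤ Rc x y z := Real.sqrt_nonneg _

lemma Rc_sq (x y z : ℝ) : Rc x y z ^ 2 = x ^ 2 + Wc y z ^ 2 := Real.sq_sqrt (by positivity)

lemma abs_x_le (x y z : ℝ) : |x| ≤ Rc x y z :=
  Real.abs_le_sqrt (by nlinarith [sq_nonneg (Wc y z)])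

lemma abs_W_le (x y z : ℝ) : |Wc y z| ≤ Rc x y z :=
  Real.abs_le_sqrt (by nlinarith [sq_nonneg x])

lemma Pset_iff {r : ℝ} (hr : 0 ≤ r) (p : R3) :
    p ∈ Pset r ↔ Rc (p 0) (p 1) (p 2) ≤ r ∧ -8 ≤ p 2 ∧ p 2 ≤ 8 := by
  rw [Rc, Real.sqrt_le_left hr, Wc]
  simp only [Pset, Set.mem_ofPred_eq]
  generalize p 0 = x, p 1 = y, p 2 = z
  constructor
  · rintro (⟨h, h1, h2⟩ | ⟨h, h1, h2⟩ | ⟨h, h1, h2⟩)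
    · rw [max_eq_right (by linarith)]
      exact ⟨by simpa using h, by linarith, by linarith⟩
    · rw [max_eq_left (by linarith)]
      refine ⟨?_, by linarith, by linarith⟩
      rcases abs_cases y with ⟨e, _⟩ | ⟨e, _⟩ <;> rw [e] <;> nlinarith
    · rw [max_eq_left (by linarith)]
      refine ⟨?_, by linarith, by linarith⟩
      rcases abs_cases y with ⟨e, _⟩ | ⟨e, _⟩ <;> rw [e] <;> nlinarith
  · rintro ⟨h, h1, h2⟩
    rcases le_total 0 z with hz | hz
    · rw [max_eq_right (by linarith)] at h
      left; exact ⟨by simpa using h, hz, h2⟩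
    · rw [max_eq_left (by linarith)] at h
      right
      rcases abs_cases y with ⟨e, _⟩ | ⟨e, _⟩ <;> rw [e] at h
      · left; exact ⟨by nlinarith, h1, hz⟩
      · right; exact ⟨by nlinarith, h1, hz⟩

lemma Rc_eq_zero_iff (x y z : ℝ) : Rc x y z = 0 ↔ x = 0 ∧ Wc y z = 0 := by
  constructor
  · intro h
    have h1 := abs_x_le x y z
    have h2 := abs_W_le x y z
    rw [h] at h1 h2
    exact ⟨abs_nonpos_iff.1 h1, abs_nonpos_iff.1 h2⟩
  · rintro ⟨rfl, h⟩
    simp [Rc, h]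

lemma Ggraph_iff (p : R3) :
    p ∈ Ggraph ↔ Rc (p 0) (p 1) (p 2) = 0 ∧ -8 ≤ p 2 ∧ p 2 ≤ 8 := by
  rw [Rc_eq_zero_iff, Wc]
  simp only [Ggraph, Set.mem_ofPred_eq]
  generalize p 0 = x, p 1 = y, p 2 = z
  constructor
  · rintro (⟨h, h', h1, h2⟩ | ⟨ε, (rfl | rfl), h, h', h1, h2⟩)
    · rw [max_eq_right (by linarith)]
      exact ⟨⟨h, by simp [h']⟩, by linarith, by linarith⟩
    · rw [max_eq_left (by linarith), h', one_mul, abs_of_nonpos h2]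
      exact ⟨⟨h, by ring⟩, by linarith, by linarith⟩
    · rw [max_eq_left (by linarith), h', abs_of_nonneg (by linarith)]
      exact ⟨⟨h, by ring⟩, by linarith, by linarith⟩
  · rintro ⟨⟨h, h'⟩, h1, h2⟩
    rcases le_total 0 z with hz | hz
    · rw [max_eq_right (by linarith), sub_zero, abs_eq_zero] at h'
      left; exact ⟨h, h', hz, h2⟩
    · rw [max_eq_left (by linarith)] at h'
      right
      rcases abs_cases y with ⟨e, _⟩ | ⟨e, _⟩ <;> rw [e] at h'
      · exact ⟨-1, Or.inr rfl, h, by linarith, h1, hz⟩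
      · exact ⟨1, Or.inl rfl, h, by linarith, h1, hz⟩

lemma core {ay z w l L w' Zv : ℝ} (hay : 0 ≤ ay) (hw : w = ay - max (-z) 0) (h3 : -3 ≤ w)
    (h3' : -3 ≤ w') (hl : w' = l * w) (l0 : 0 ≤ l) (lL : l ≤ L) (hL : 1 ≤ L) (z1 : -8 ≤ z)
    (z2 : z ≤ 8) (hZ : Zv = -8 + (z + 8) * ((min w' 0 + 8) / (min w 0 + 8))) :
    -8 ≤ Zv ∧ Zv ≤ 8 ∧ 0 ≤ w' + max (-Zv) 0 ∧ w' + max (-Zv) 0 ≤ 2 * L * ay := by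
  rcases le_or_gt 0 w with h | h
  · have h' : 0 ≤ w' := by rw [hl]; positivity
    rw [min_eq_right h, min_eq_right h'] at hZ
    have e : Zv = z := by rw [hZ]; norm_num
    rw [e]
    have hm : 0 ≤ max (-z) 0 := le_max_right _ _
    refine ⟨z1, z2, by linarith, ?_⟩
    have : l * w ≤ L * w := mul_le_mul_of_nonneg_right lL h
    have e2 : ay = w + max (-z) 0 := by linarith
    rw [hl, e2]
    nlinarith [mul_nonneg (by linarith : 0 ≤ L) hm, mul_nonneg (by linarith : 0 ≤ L) h]
  · have h' : w' ≤ 0 := by rw [hl]; exact mul_nonpos_of_nonneg_of_nonpos l0 h.le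
    have hz : z ≤ 0 := by
      by_contra hc
      rw [max_eq_right (by linarith)] at hw
      linarith
    rw [max_eq_left (by linarith)] at hw
    rw [min_eq_left h.le, min_eq_left h'] at hZ
    set t := (w' + 8) / (w + 8) with ht
    have t0 : 0 ≤ t := div_nonneg (by linarith) (by linarith)
    have t1 : t ≤ 8 / 5 := by
      rw [ht, div_le_iff₀ (by linarith)]; linarith
    have tm : t * (w + 8) = w' + 8 := div_mul_cancel₀ _ (by linarith)
    have e : Zv = w' - ay * t := by rw [hZ]; nlinarith
    have p1 : 0 ≤ ay * t := mul_nonneg hay t0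
    have p2 : 0 ≤ (z + 8) * t := mul_nonneg (by linarith) t0
    rw [max_eq_left (by linarith)]
    refine ⟨by linarith, by linarith, by linarith, ?_⟩
    rw [e]
    nlinarith [mul_nonneg hay (by linarith : 0 ≤ L - 1), mul_nonneg hay (by linarith : 0 ≤ 8 / 5 - t)]

section
variable {φ : ℝ → ℝ} {L : ℝ}

lemma Good.le (h : Good φ L) {s : ℝ} (h0 : 0 ≤ s) (h3 : s ≤ 3) : φ s ≤ L * s := by
  have := h.lip s 0 h0 h3 le_rfl (by norm_num)
  rw [h.zero, sub_zero, sub_zero, abs_of_nonneg h0] at this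
  exact (le_abs_self _).trans this

lemma Good.nonneg (h : Good φ L) {s : ℝ} (h0 : 0 ≤ s) (h3 : s ≤ 3) : 0 ≤ φ s := by
  rcases h0.eq_or_lt with rfl | h0
  · rw [h.zero]
  · exact (h.pos s h0 h3).le

lemma lamc_nonneg (h : Good φ L) {x y z : ℝ} (d : Dom x y z) : 0 ≤ lamc φ x y z :=
  div_nonneg (h.nonneg (Rc_nonneg _ _ _) d.r) (Rc_nonneg _ _ _)

lemma lamc_le (h : Good φ L) {x y z : ℝ} (d : Dom x y z) : lamc φ x y z ≤ L :=
  div_le_of_le_mul₀ (Rc_nonneg _ _ _) (by linarith [h.one_le]) (h.le (Rc_nonneg _ _ _) d.r)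

lemma lamc_mul (h : Good φ L) (x y z : ℝ) : lamc φ x y z * Rc x y z = φ (Rc x y z) := by
  rcases eq_or_ne (Rc x y z) 0 with e | e
  · rw [e, h.zero, mul_zero]
  · exact div_mul_cancel₀ _ e

lemma lamW_bd (h : Good φ L) {x y z : ℝ} (d : Dom x y z) : |lamc φ x y z * Wc y z| ≤ 3 := by
  rw [abs_mul, abs_of_nonneg (lamc_nonneg h d)]
  calc _ ≤ lamc φ x y z * Rc x y z :=
        mul_le_mul_of_nonneg_left (abs_W_le _ _ _) (lamc_nonneg h d)
    _ = φ (Rc x y z) := lamc_mul h _ _ _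
    _ ≤ 3 := h.le3 _ (Rc_nonneg _ _ _) d.r

lemma W_bd {x y z : ℝ} (d : Dom x y z) : |Wc y z| ≤ 3 := (abs_W_le x y z).trans d.r

lemma coreF (h : Good φ L) {x y z : ℝ} (d : Dom x y z) :
    -8 ≤ Zc φ x y z ∧ Zc φ x y z ≤ 8 ∧ 0 ≤ Yc φ x y z ∧ Yc φ x y z ≤ 2 * L * |y| :=
  core (abs_nonneg y) rfl (abs_le.1 (W_bd d)).1 (abs_le.1 (lamW_bd h d)).1 rfl
    (lamc_nonneg h d) (lamc_le h d) h.one_le d.lo d.hi rfl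

lemma abs_newy (h : Good φ L) {x y z : ℝ} (d : Dom x y z) :
    |y / |y| * Yc φ x y z| = Yc φ x y z := by
  obtain ⟨-, -, h1, h2⟩ := coreF h d
  rcases eq_or_ne y 0 with rfl | hy
  · simp at h2 ⊢; linarith
  · rw [abs_mul, abs_div, abs_abs, div_self (abs_ne_zero.2 hy), one_mul, abs_of_nonneg h1]

lemma newW (h : Good φ L) {x y z : ℝ} (d : Dom x y z) :
    Wc (y / |y| * Yc φ x y z) (Zc φ x y z) = lamc φ x y z * Wc y z := by
  rw [Wc, abs_newy h d, Yc]; ring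

lemma newR (h : Good φ L) {x y z : ℝ} (d : Dom x y z) :
    Rc (lamc φ x y z * x) (y / |y| * Yc φ x y z) (Zc φ x y z) = φ (Rc x y z) := by
  rw [Rc, newW h d, ← lamc_mul h]
  rw [show (lamc φ x y z * x) ^ 2 + (lamc φ x y z * Wc y z) ^ 2
    = (lamc φ x y z * Rc x y z) ^ 2 by rw [mul_pow _ (Rc x y z), Rc_sq]; ring]
  exact Real.sqrt_sq (mul_nonneg (lamc_nonneg h d) (Rc_nonneg _ _ _))

lemma newDom (h : Good φ L) {x y z : ℝ} (d : Dom x y z) :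
    Dom (lamc φ x y z * x) (y / |y| * Yc φ x y z) (Zc φ x y z) := by
  obtain ⟨h1, h2, -, -⟩ := coreF h d
  exact ⟨by rw [newR h d]; exact h.le3 _ (Rc_nonneg _ _ _) d.r, h1, h2⟩

lemma inverse {ψ : ℝ → ℝ} {M : ℝ} (h : Good φ L) (k : Good ψ M)
    (inv : ∀ s, 0 ≤ s → s ≤ 3 → ψ (φ s) = s) {p : R3} (d : Dom (p 0) (p 1) (p 2)) :
    Fmap ψ (Fmap φ p) = p := by
  have nd := newDom h d
  have nW := newW h d
  have nR := newR h d
  have ca := abs_newy h d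
  have cb := coreF k nd
  have ly : lamc ψ (lamc φ (p 0) (p 1) (p 2) * p 0) (p 1 / |p 1| * Yc φ (p 0) (p 1) (p 2))
      (Zc φ (p 0) (p 1) (p 2)) = Rc (p 0) (p 1) (p 2) / φ (Rc (p 0) (p 1) (p 2)) := by
    rw [lamc, nR, inv _ (Rc_nonneg _ _ _) d.r]
  simp only [Fmap, mk3_0, mk3_1, mk3_2]
  revert nd nW nR ca cb ly
  have hZ : Zc φ (p 0) (p 1) (p 2) = -8 + (p 2 + 8) * ((min (lamc φ (p 0) (p 1) (p 2) * Wc (p 1) (p 2)) 0 + 8) / (min (Wc (p 1) (p 2)) 0 + 8)) := rfl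
  have b1 := abs_le.1 (lamW_bd h d)
  have b2 := abs_le.1 (W_bd d)
  revert hZ b1 b2
  have hlx : Rc (p 0) (p 1) (p 2) / φ (Rc (p 0) (p 1) (p 2)) * (lamc φ (p 0) (p 1) (p 2) * p 0)
      = p 0 ∧ Rc (p 0) (p 1) (p 2) / φ (Rc (p 0) (p 1) (p 2)) *
        (lamc φ (p 0) (p 1) (p 2) * Wc (p 1) (p 2)) = Wc (p 1) (p 2) := by
    rcases (Rc_nonneg (p 0) (p 1) (p 2)).eq_or_lt with e | e
    · obtain ⟨e1, e2⟩ := (Rc_eq_zero_iff _ _ _).1 e.symm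
      rw [e2, e1]; simp
    · have := h.pos _ e d.r
      rw [lamc]
      constructor <;> field_simp
  obtain ⟨hlx, hlw⟩ := hlx
  generalize hX : lamc φ (p 0) (p 1) (p 2) * p 0 = X at *
  generalize hY : Yc φ (p 0) (p 1) (p 2) = Y at *
  generalize hZ : Zc φ (p 0) (p 1) (p 2) = Z at *
  generalize hV : lamc φ (p 0) (p 1) (p 2) * Wc (p 1) (p 2) = V at *
  intro hZ' b1 b2 nd nW nR ca cb ly
  have eZ : Zc ψ X (p 1 / |p 1| * Y) Z = p 2 := by
    rw [Zc, ly, nW, hlw, hZ']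
    have m1 : 0 < min V 0 + 8 := by
      have : -3 ≤ min V 0 := le_min b1.1 (by norm_num)
      linarith
    have m2 : 0 < min (Wc (p 1) (p 2)) 0 + 8 := by
      have : -3 ≤ min (Wc (p 1) (p 2)) 0 := le_min b2.1 (by norm_num)
      linarith
    field_simp
    ring
  have eY : Yc ψ X (p 1 / |p 1| * Y) Z = |p 1| := by
    rw [Yc, eZ, ly, nW, hlw, Wc]; ring
  refine R3_ext ?_ ?_ ?_
  · rw [mk3_0, ly, hlx]
  · rw [mk3_1, eY, ca]
    rw [eY, ca] at cb
    rcases eq_or_ne (p 1) 0 with hy | hy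
    · simp [hy]
    · have : Y ≠ 0 := by
        rintro rfl
        have := cb.2.2.2
        simp at this
        exact hy this
      have := abs_ne_zero.2 hy
      field_simp
  · rw [mk3_2, eZ]

lemma lip_lam (h : Good φ L) {x y z x' y' z' : ℝ} (d : Dom x y z) (d' : Dom x' y' z')
    (e e' : ℝ) (he' : |e'| ≤ Rc x' y' z') :
    |lamc φ x y z * e - lamc φ x' y' z' * e'| ≤
      L * |e - e'| + 2 * L * |Rc x y z - Rc x' y' z'| := by
  have hl := lamc_nonneg h d
  have hL := lamc_le h d
  have m1 := lamc_mul h x y z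
  have m2 := lamc_mul h x' y' z'
  have lp := h.lip _ _ (Rc_nonneg x y z) d.r (Rc_nonneg x' y' z') d'.r
  rw [← m1, ← m2] at lp
  generalize lamc φ x y z = l at *
  generalize lamc φ x' y' z' = l' at *
  generalize Rc x y z = r at *
  generalize Rc x' y' z' = r' at *
  have key : |l - l'| * r' ≤ 2 * L * |r - r'| := by
    have h0 : 0 ≤ r' := (abs_nonneg _).trans he'
    rw [← abs_of_nonneg h0, ← abs_mul, abs_of_nonneg h0]
    calc |(l - l') * r'| = |(l * r - l' * r') - l * (r - r')| := by congr 1; ring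
      _ ≤ |l * r - l' * r'| + |l * (r - r')| := abs_sub _ _
      _ = |l * r - l' * r'| + l * |r - r'| := by rw [abs_mul l, abs_of_nonneg hl]
      _ ≤ L * |r - r'| + L * |r - r'| := by gcongr
      _ = _ := by ring
  calc |l * e - l' * e'| = |l * (e - e') + (l - l') * e'| := by congr 1; ring
    _ ≤ |l * (e - e')| + |(l - l') * e'| := abs_add_le _ _
    _ = l * |e - e'| + |l - l'| * |e'| := by rw [abs_mul, abs_mul, abs_of_nonneg hl]
    _ ≤ L * |e - e'| + |l - l'| * r' := by gcongr
    _ ≤ _ := by linarith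

lemma lip_R (x y z x' y' z' : ℝ) :
    |Rc x y z - Rc x' y' z'| ≤ |x - x'| + |Wc y z - Wc y' z'| := by
  have gen : ∀ a b c d : ℝ, √(a ^ 2 + b ^ 2) ≤ √(c ^ 2 + d ^ 2) + (|a - c| + |b - d|) := by
    intro a b c d
    have q := Real.sq_sqrt (show 0 ≤ c ^ 2 + d ^ 2 by positivity)
    have q0 := Real.sqrt_nonneg (c ^ 2 + d ^ 2)
    have q1 : |c| ≤ √(c ^ 2 + d ^ 2) := Real.abs_le_sqrt (by nlinarith)
    have q2 : |d| ≤ √(c ^ 2 + d ^ 2) := Real.abs_le_sqrt (by nlinarith)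
    generalize √(c ^ 2 + d ^ 2) = s at *
    have e1 : c * (a - c) ≤ s * |a - c| := by
      refine (le_abs_self _).trans ?_
      rw [abs_mul]; gcongr
    have e2 : d * (b - d) ≤ s * |b - d| := by
      refine (le_abs_self _).trans ?_
      rw [abs_mul]; gcongr
    apply Real.sqrt_le_iff.2 ⟨by positivity, ?_⟩
    have e3 := sq_abs (a - c)
    have e4 := sq_abs (b - d)
    have e5 : 0 ≤ |a - c| * |b - d| := by positivity
    nlinarith
  rw [abs_sub_le_iff]
  constructor
  · have := gen x (Wc y z) x' (Wc y' z')
    simp only [Rc]; linarith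
  · have := gen x' (Wc y' z') x (Wc y z)
    rw [abs_sub_comm x' x, abs_sub_comm (Wc y' z')] at this
    simp only [Rc]; linarith

lemma lip_W (y z y' z' : ℝ) : |Wc y z - Wc y' z'| ≤ |y - y'| + |z - z'| := by
  have h1 := abs_abs_sub_abs_le y y'
  have h2 := abs_max_sub_max_le_abs (-z) (-z') 0
  rw [show -z - -z' = -(z - z') by ring, abs_neg] at h2
  calc |Wc y z - Wc y' z'| = |(|y| - |y'|) - (max (-z) 0 - max (-z') 0)| := by
        simp only [Wc]; congr 1; ring
    _ ≤ _ := (abs_sub _ _).trans (by linarith)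

lemma my_min_lip (a b c : ℝ) : |min a c - min b c| ≤ |a - b| := by
  have := abs_min_sub_min_le_max a c b c
  simpa using this

lemma lip_ratio {m m' n n' z z' A B D : ℝ} (hm : -3 ≤ m) (hm' : -3 ≤ m') (hn : -3 ≤ n)
    (hn' : -3 ≤ n') (gn : n ≤ 0) (gn' : n' ≤ 0) (z1 : -8 ≤ z') (z2 : z' ≤ 8)
    (hA : |n - n'| ≤ A) (hB : |m - m'| ≤ B) (hD : |z - z'| ≤ D) :
    |(-8 + (z + 8) * ((n + 8) / (m + 8))) - (-8 + (z' + 8) * ((n' + 8) / (m' + 8)))| ≤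
      2 * D + 16 * (A / 5 + B / 3) := by
  have a1 : 0 ≤ (n + 8) / (m + 8) := div_nonneg (by linarith) (by linarith)
  have a2 : (n + 8) / (m + 8) ≤ 2 := by rw [div_le_iff₀ (by linarith)]; linarith
  have a3 : |(n + 8) / (m + 8) - (n' + 8) / (m' + 8)| ≤ A / 5 + B / 3 := by
    have p1 : 5 ≤ m + 8 := by linarith
    have p2 : 5 ≤ m' + 8 := by linarith
    have e : (n + 8) / (m + 8) - (n' + 8) / (m' + 8) =
        (n - n') / (m + 8) - (n' + 8) / (m' + 8) * (m - m') / (m + 8) := by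
      have : m + 8 ≠ 0 := by linarith
      have : m' + 8 ≠ 0 := by linarith
      field_simp
      ring
    have b1 : 0 ≤ (n' + 8) / (m' + 8) := div_nonneg (by linarith) (by linarith)
    have b2 : (n' + 8) / (m' + 8) ≤ 8 / 5 := by rw [div_le_iff₀ (by linarith)]; linarith
    have c1 : |(n - n') / (m + 8)| ≤ A / 5 := by
      rw [abs_div, abs_of_pos (by linarith : 0 < m + 8)]
      exact div_le_div₀ ((abs_nonneg _).trans hA) hA (by norm_num) p1
    have c2 : |(n' + 8) / (m' + 8) * (m - m') / (m + 8)| ≤ B / 3 := by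
      rw [abs_div, abs_of_pos (by linarith : 0 < m + 8), abs_mul, abs_of_nonneg b1]
      have hB0 : 0 ≤ B := (abs_nonneg _).trans hB
      calc _ ≤ (8 / 5 * B) / 5 := by gcongr
        _ ≤ _ := by linarith
    rw [e]
    exact (abs_sub _ _).trans (add_le_add c1 c2)
  generalize (n + 8) / (m + 8) = t at *
  generalize (n' + 8) / (m' + 8) = t' at *
  have hD0 : 0 ≤ D := (abs_nonneg _).trans hD
  calc _ = |t * (z - z') + (z' + 8) * (t - t')| := by congr 1; ring
    _ ≤ |t * (z - z')| + |(z' + 8) * (t - t')| := abs_add_le _ _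
    _ = t * |z - z'| + (z' + 8) * |t - t'| := by
      rw [abs_mul, abs_mul, abs_of_nonneg a1, abs_of_nonneg (by linarith : 0 ≤ z' + 8)]
    _ ≤ 2 * D + 16 * (A / 5 + B / 3) := by gcongr; linarith

lemma lip_sign {y y' Y Y' K D : ℝ} (hK : 0 ≤ K) (hY : 0 ≤ Y) (hY' : 0 ≤ Y')
    (b : Y ≤ K * |y|) (b' : Y' ≤ K * |y'|) (hD : |Y - Y'| ≤ D) (hD' : K * |y - y'| ≤ D) :
    |y / |y| * Y - y' / |y'| * Y'| ≤ D := by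
  have sg : ∀ t : ℝ, (0 < t ∧ t / |t| = 1 ∧ |t| = t) ∨ (t = 0) ∨
      (t < 0 ∧ t / |t| = -1 ∧ |t| = -t) := by
    intro t
    rcases lt_trichotomy t 0 with h | h | h
    · refine Or.inr (Or.inr ⟨h, ?_, abs_of_neg h⟩)
      rw [abs_of_neg h, div_neg, div_self h.ne]
    · exact Or.inr (Or.inl h)
    · exact Or.inl ⟨h, by rw [abs_of_pos h, div_self h.ne'], abs_of_pos h⟩
  have g1 := mul_le_mul_of_nonneg_left (le_abs_self (y - y')) hK
  have g2 := mul_le_mul_of_nonneg_left (neg_abs_le (y - y')) hK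
  have f1 := abs_le.1 hD
  rw [abs_le]
  rcases sg y with ⟨s, e1, e2⟩ | rfl | ⟨s, e1, e2⟩ <;>
  rcases sg y' with ⟨s', e1', e2'⟩ | rfl | ⟨s', e1', e2'⟩ <;>
  simp only [*, abs_zero, div_zero, zero_mul, mul_zero] at * <;>
  constructor <;> nlinarith

lemma dist_le_sum (u v : R3) : dist u v ≤ |u 0 - v 0| + |u 1 - v 1| + |u 2 - v 2| := by
  rw [EuclideanSpace.dist_eq, Fin.sum_univ_three]
  apply Real.sqrt_le_iff.2 ⟨by positivity, ?_⟩
  simp only [Real.dist_eq]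
  have e5 : 0 ≤ |u 0 - v 0| * |u 1 - v 1| := by positivity
  have e6 : 0 ≤ |u 0 - v 0| * |u 2 - v 2| := by positivity
  have e7 : 0 ≤ |u 1 - v 1| * |u 2 - v 2| := by positivity
  nlinarith

lemma coord_le_dist (u v : R3) (i : Fin 3) : |u i - v i| ≤ dist u v := by
  rw [dist_eq_norm]
  simpa using PiLp.norm_apply_le (u - v) i

lemma lip_F (h : Good φ L) {u v : R3} (d : Dom (u 0) (u 1) (u 2)) (d' : Dom (v 0) (v 1) (v 2)) :
    dist (Fmap φ u) (Fmap φ v) ≤ 100 * L * dist u v := by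
  refine (dist_le_sum _ _).trans ?_
  simp only [Fmap, mk3_0, mk3_1, mk3_2]
  have c0 := coord_le_dist u v 0
  have c1 := coord_le_dist u v 1
  have c2 := coord_le_dist u v 2
  have hL := h.one_le
  set D := dist u v with hD
  have hD0 : 0 ≤ D := dist_nonneg
  have hLD : D ≤ L * D := by nlinarith
  have w := lip_W (u 1) (u 2) (v 1) (v 2)
  have r := lip_R (u 0) (u 1) (u 2) (v 0) (v 1) (v 2)
  have r' : |Rc (u 0) (u 1) (u 2) - Rc (v 0) (v 1) (v 2)| ≤ 3 * D := by linarith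
  have w' : |Wc (u 1) (u 2) - Wc (v 1) (v 2)| ≤ 2 * D := by linarith
  have L0 : 0 ≤ L := by linarith
  have r'' := mul_le_mul_of_nonneg_left r' L0
  have w'' := mul_le_mul_of_nonneg_left w' L0
  have c0' := mul_le_mul_of_nonneg_left c0 L0
  have c1' := mul_le_mul_of_nonneg_left c1 L0
  have hx := lip_lam h d d' (u 0) (v 0) (abs_x_le _ _ _)
  have hw := lip_lam h d d' (Wc (u 1) (u 2)) (Wc (v 1) (v 2)) (abs_W_le _ _ _)
  have hx' : |lamc φ (u 0) (u 1) (u 2) * u 0 - lamc φ (v 0) (v 1) (v 2) * v 0| ≤ 7 * (L * D) := by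
    linarith
  have hw' : |lamc φ (u 0) (u 1) (u 2) * Wc (u 1) (u 2) -
      lamc φ (v 0) (v 1) (v 2) * Wc (v 1) (v 2)| ≤ 8 * (L * D) := by
    linarith
  have n3 : (-3 : ℝ) ≤ 0 := by norm_num
  have hz : |Zc φ (u 0) (u 1) (u 2) - Zc φ (v 0) (v 1) (v 2)| ≤
      2 * D + 16 * ((8 * (L * D)) / 5 + (2 * D) / 3) :=
    lip_ratio (le_min (abs_le.1 (W_bd d)).1 n3) (le_min (abs_le.1 (W_bd d')).1 n3)
      (le_min (abs_le.1 (lamW_bd h d)).1 n3) (le_min (abs_le.1 (lamW_bd h d')).1 n3)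
      (min_le_right _ _) (min_le_right _ _) d'.lo d'.hi
      ((my_min_lip _ _ _).trans hw') ((my_min_lip _ _ _).trans w') c2
  have hz' : |Zc φ (u 0) (u 1) (u 2) - Zc φ (v 0) (v 1) (v 2)| ≤ 39 * (L * D) := by linarith
  obtain ⟨-, -, y1, y2⟩ := coreF h d
  obtain ⟨-, -, y3, y4⟩ := coreF h d'
  have hY : |Yc φ (u 0) (u 1) (u 2) - Yc φ (v 0) (v 1) (v 2)| ≤ 47 * (L * D) := by
    have h2 := abs_max_sub_max_le_abs (-Zc φ (u 0) (u 1) (u 2)) (-Zc φ (v 0) (v 1) (v 2)) 0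
    rw [show ∀ a b : ℝ, -a - -b = -(a - b) by intros; ring, abs_neg] at h2
    simp only [Yc]
    rw [add_sub_add_comm]
    refine (abs_add_le _ _).trans ?_
    linarith
  have hy := lip_sign (by linarith : 0 ≤ 2 * L) y1 y3 y2 y4 hY (by nlinarith)
  nlinarith

lemma fix_F (h : Good φ L) {p : R3} (e : Rc (p 0) (p 1) (p 2) = 3) : Fmap φ p = p := by
  have l1 : lamc φ (p 0) (p 1) (p 2) = 1 := by
    rw [lamc, e, h.three]; norm_num
  have hW : -3 ≤ Wc (p 1) (p 2) := by
    have := abs_W_le (p 0) (p 1) (p 2)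
    rw [e] at this
    exact (abs_le.1 this).1
  have m : 0 < min (Wc (p 1) (p 2)) 0 + 8 := by
    have : -3 ≤ min (Wc (p 1) (p 2)) 0 := le_min hW (by norm_num)
    linarith
  have z1 : Zc φ (p 0) (p 1) (p 2) = p 2 := by
    rw [Zc, l1, one_mul, div_self m.ne']; ring
  have y1 : Yc φ (p 0) (p 1) (p 2) = |p 1| := by
    rw [Yc, z1, l1, Wc]; ring
  refine R3_ext ?_ ?_ ?_
  · simp [Fmap, l1]
  · simp only [Fmap, mk3_1, y1]
    rcases eq_or_ne (p 1) 0 with hy | hy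
    · simp [hy]
    · exact div_mul_cancel₀ _ (abs_ne_zero.2 hy)
  · simp [Fmap, z1]

end

lemma Dom_iff (p : R3) : p ∈ Pset 3 ↔ Dom (p 0) (p 1) (p 2) := by
  rw [Pset_iff (by norm_num)]
  exact ⟨fun h => ⟨h.1, h.2.1, h.2.2⟩, fun h => ⟨h.1, h.2, h.3⟩⟩

lemma cont_W : Continuous fun p : R3 => Wc (p 1) (p 2) := by
  unfold Wc; fun_prop

lemma cont_R : Continuous fun p : R3 => Rc (p 0) (p 1) (p 2) := by
  have := cont_W
  unfold Rc; fun_prop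

lemma ver_R {p : R3} (h : p ∈ verBoundary) : Rc (p 0) (p 1) (p 2) = 3 := by
  obtain ⟨hf, hn⟩ := h
  have hset : Pset 3 = {p : R3 | Rc (p 0) (p 1) (p 2) ≤ 3 ∧ -8 ≤ p 2 ∧ p 2 ≤ 8} :=
    Set.ext fun p => Pset_iff (by norm_num) p
  have hcl : IsClosed (Pset 3) := by
    rw [hset]
    have c2 : Continuous fun p : R3 => p 2 := by fun_prop
    exact (isClosed_le cont_R continuous_const).inter
      ((isClosed_le continuous_const c2).inter (isClosed_le c2 continuous_const))
  have hp : p ∈ Pset 3 := hcl.frontier_subset hf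
  rw [hset] at hp
  obtain ⟨h1, h2, h3⟩ := hp
  by_contra hne
  have hlt : Rc (p 0) (p 1) (p 2) < 3 := lt_of_le_of_ne h1 hne
  have hsq : (p 0) ^ 2 + Wc (p 1) (p 2) ^ 2 < 9 := by
    rw [← Rc_sq]; nlinarith [Rc_nonneg (p 0) (p 1) (p 2)]
  apply hn
  rcases h3.eq_or_lt with e | l3
  · left; left
    refine ⟨e, ?_⟩
    rw [Wc, e, max_eq_right (by norm_num), sub_zero, sq_abs] at hsq
    exact hsq
  rcases h2.eq_or_lt with e | l2
  · rw [Wc, ← e, max_eq_left (by norm_num)] at hsq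
    rcases abs_cases (p 1) with ⟨e', _⟩ | ⟨e', _⟩ <;> rw [e'] at hsq
    · left; right
      exact ⟨e.symm, by nlinarith⟩
    · right
      exact ⟨e.symm, by nlinarith⟩
  exfalso
  rw [frontier, hcl.closure_eq] at hf
  apply hf.2
  have c2 : Continuous fun p : R3 => p 2 := by fun_prop
  have ho : IsOpen {p : R3 | Rc (p 0) (p 1) (p 2) < 3 ∧ -8 < p 2 ∧ p 2 < 8} :=
    (isOpen_lt cont_R continuous_const).inter
      ((isOpen_lt continuous_const c2).inter (isOpen_lt c2 continuous_const))
  refine interior_maximal ?_ ho ⟨hlt, l2, l3⟩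
  rintro q ⟨q1, q2, q3⟩
  rw [hset]
  exact ⟨q1.le, q2.le, q3.le⟩

lemma interior_empty_of (S : Set R3) (v : R3)
    (h : ∀ p : R3, ∀ t : ℝ, 0 < t → p ∈ S → p + t • v ∈ S → p + (2 * t) • v ∈ S → False) :
    interior S = ∅ := by
  rw [Set.eq_empty_iff_forall_notMem]
  intro p hp
  have hS : ∀ᶠ q in nhds p, q ∈ S := mem_interior_iff_mem_nhds.1 hp
  have c1 : Filter.Tendsto (fun t : ℝ => p + t • v) (nhds 0) (nhds p) := by
    have : Continuous fun t : ℝ => p + t • v := by fun_prop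
    simpa using this.tendsto 0
  have c2 : Filter.Tendsto (fun t : ℝ => p + (2 * t) • v) (nhds 0) (nhds p) := by
    have : Continuous fun t : ℝ => p + (2 * t) • v := by fun_prop
    simpa using this.tendsto 0
  have := ((c1.eventually hS).and (c2.eventually hS)).filter_mono
    (nhdsWithin_le_nhds (s := Set.Ioi 0))
  obtain ⟨t, ⟨h1, h2⟩, ht⟩ := (this.and self_mem_nhdsWithin).exists
  exact h p t ht (interior_subset hp) h1 h2

/-- The exceptional set. -/
def Zex (δ : ℝ) : Set R3 :=
  (({p | p 1 = 0} ∪ {p | p 2 = 0}) ∪ {p | Wc (p 1) (p 2) = 0}) ∪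
    {p | Rc (p 0) (p 1) (p 2) = δ}

lemma Zex_closed_empty (δ : ℝ) : IsClosed (Zex δ) ∧ interior (Zex δ) = ∅ := by
  have k1 : IsClosed {p : R3 | p 1 = 0} :=
    isClosed_eq (by fun_prop) continuous_const
  have k2 : IsClosed {p : R3 | p 2 = 0} :=
    isClosed_eq (by fun_prop) continuous_const
  have k3 : IsClosed {p : R3 | Wc (p 1) (p 2) = 0} := isClosed_eq cont_W continuous_const
  have k4 : IsClosed {p : R3 | Rc (p 0) (p 1) (p 2) = δ} := isClosed_eq cont_R continuous_const
  have i1 : interior {p : R3 | p 1 = 0} = ∅ := by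
    apply interior_empty_of _ (mk3 0 1 0)
    intro p t ht h1 h2 _
    simp at h1 h2; linarith
  have i2 : interior {p : R3 | p 2 = 0} = ∅ := by
    apply interior_empty_of _ (mk3 0 0 1)
    intro p t ht h1 h2 _
    simp at h1 h2; linarith
  have i3 : interior {p : R3 | Wc (p 1) (p 2) = 0} = ∅ := by
    apply interior_empty_of _ (mk3 0 1 0)
    intro p t ht h1 h2 h3
    simp [Wc] at h1 h2 h3
    have a := abs_eq_abs.1 ((sub_eq_zero.1 h2).trans (sub_eq_zero.1 h1).symm)
    have b := abs_eq_abs.1 ((sub_eq_zero.1 h3).trans (sub_eq_zero.1 h1).symm)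
    rcases a with a | a <;> rcases b with b | b <;> linarith
  have i4 : interior {p : R3 | Rc (p 0) (p 1) (p 2) = δ} = ∅ := by
    apply interior_empty_of _ (mk3 1 0 0)
    intro p t ht h1 h2 h3
    simp at h1 h2 h3
    have e1 := Rc_sq (p 0) (p 1) (p 2)
    have e2 := Rc_sq (p 0 + t) (p 1) (p 2)
    have e3 := Rc_sq (p 0 + 2 * t) (p 1) (p 2)
    rw [h1] at e1; rw [h2] at e2; rw [h3] at e3
    have : t ^ 2 > 0 := by positivity
    nlinarith
  refine ⟨((k1.union k2).union k3).union k4, ?_⟩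
  unfold Zex
  rw [interior_union_isClosed_of_interior_empty ((k1.union k2).union k3) i4,
    interior_union_isClosed_of_interior_empty (k1.union k2) i3,
    interior_union_isClosed_of_interior_empty k1 i2, i1]

lemma diff_div' {f g : R3 → ℝ} {p : R3} (hf : DifferentiableAt ℝ f p)
    (hg : DifferentiableAt ℝ g p) (h0 : g p ≠ 0) :
    DifferentiableAt ℝ (fun q => f q / g q) p := by
  simp only [div_eq_mul_inv]
  exact hf.mul (hg.inv h0)

lemma diff_mul' {f g : R3 → ℝ} {p : R3} (hf : DifferentiableAt ℝ f p)
    (hg : DifferentiableAt ℝ g p) : DifferentiableAt ℝ (fun q => f q * g q) p := hf.mul hg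

lemma diff_max {f : R3 → ℝ} {p : R3} (h : DifferentiableAt ℝ f p) (h0 : f p ≠ 0) :
    DifferentiableAt ℝ (fun q => max (f q) 0) p := by
  have : (fun q => max (f q) 0) = fun q => (f q + |f q|) / 2 := by
    ext q
    rcases le_total 0 (f q) with h | h
    · rw [max_eq_left h, abs_of_nonneg h]; ring
    · rw [max_eq_right h, abs_of_nonpos h]; ring
  rw [this]
  have h' := h.abs h0
  fun_prop

lemma diff_min {f : R3 → ℝ} {p : R3} (h : DifferentiableAt ℝ f p) (h0 : f p ≠ 0) :
    DifferentiableAt ℝ (fun q => min (f q) 0) p := by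
  have : (fun q => min (f q) 0) = fun q => (f q - |f q|) / 2 := by
    ext q
    rcases le_total 0 (f q) with h | h
    · rw [min_eq_right h, abs_of_nonneg h]; ring
    · rw [min_eq_left h, abs_of_nonpos h]; ring
  rw [this]
  have h' := h.abs h0
  fun_prop

lemma Zc_ne {φ : ℝ → ℝ} {L : ℝ} (h : Good φ L) {x y z : ℝ} (d : Dom x y z) (hz : z ≠ 0)
    (hW : Wc y z ≠ 0) (hl : 0 < lamc φ x y z) : Zc φ x y z ≠ 0 := by
  rcases hW.lt_or_gt with hw | hw
  · have hw' : lamc φ x y z * Wc y z < 0 := mul_neg_of_pos_of_neg hl hw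
    have b1 := abs_le.1 (lamW_bd h d)
    have b2 := abs_le.1 (W_bd d)
    have hzW : z ≤ Wc y z := by
      have hy := abs_nonneg y
      have hw2 := hw
      unfold Wc at hw2 ⊢
      rcases max_cases (-z) 0 with ⟨e, _⟩ | ⟨e, _⟩ <;> rw [e] at hw2 ⊢ <;> linarith
    rw [Zc, min_eq_left hw.le, min_eq_left hw'.le]
    generalize lamc φ x y z * Wc y z = V at *
    generalize Wc y z = W at *
    have t0 : 0 ≤ (V + 8) / (W + 8) := div_nonneg (by linarith) (by linarith)
    have tm : (V + 8) / (W + 8) * (W + 8) = V + 8 := div_mul_cancel₀ _ (by linarith)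
    nlinarith
  · rw [Zc, min_eq_right hw.le, min_eq_right (mul_pos hl hw).le]
    norm_num
    exact hz

lemma diff_F {φ : ℝ → ℝ} {L δ : ℝ} (h : Good φ L)
    (hφ : ∀ s, s ≠ δ → DifferentiableAt ℝ φ s) :
    DifferentiableOn ℝ (Fmap φ) (Pset 3 \ Zex δ) := by
  rintro p ⟨hp, hn⟩
  rw [Dom_iff] at hp
  simp only [Zex, Set.mem_union, Set.mem_ofPred_eq, not_or] at hn
  obtain ⟨⟨⟨hy, hz⟩, hW⟩, hR⟩ := hn
  apply DifferentiableAt.differentiableWithinAt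
  have dx : DifferentiableAt ℝ (fun q : R3 => q 0) p := by fun_prop
  have dy : DifferentiableAt ℝ (fun q : R3 => q 1) p := by fun_prop
  have dz : DifferentiableAt ℝ (fun q : R3 => q 2) p := by fun_prop
  have dW : DifferentiableAt ℝ (fun q : R3 => Wc (q 1) (q 2)) p := by
    unfold Wc
    exact (dy.abs hy).sub (diff_max dz.neg (neg_ne_zero.2 hz))
  have hR0 : 0 < Rc (p 0) (p 1) (p 2) := by
    refine lt_of_le_of_ne (Rc_nonneg _ _ _) (fun e => hW ?_)
    exact ((Rc_eq_zero_iff _ _ _).1 e.symm).2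
  have dR : DifferentiableAt ℝ (fun q : R3 => Rc (q 0) (q 1) (q 2)) p := by
    unfold Rc
    refine DifferentiableAt.sqrt (by fun_prop) ?_
    rw [← Rc_sq]; positivity
  have dl : DifferentiableAt ℝ (fun q : R3 => lamc φ (q 0) (q 1) (q 2)) p := by
    unfold lamc
    have dc : DifferentiableAt ℝ (fun q : R3 => φ (Rc (q 0) (q 1) (q 2))) p :=
      DifferentiableAt.comp p (hφ _ hR) dR
    exact diff_div' dc dR hR0.ne'
  have hl : 0 < lamc φ (p 0) (p 1) (p 2) := div_pos (h.pos _ hR0 hp.r) hR0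
  have m : 0 < min (Wc (p 1) (p 2)) 0 + 8 := by
    have : -3 ≤ min (Wc (p 1) (p 2)) 0 := le_min (abs_le.1 (W_bd hp)).1 (by norm_num)
    linarith
  have dZ : DifferentiableAt ℝ (fun q : R3 => Zc φ (q 0) (q 1) (q 2)) p := by
    unfold Zc
    have d1 := diff_min dW hW
    have d2 := diff_min (diff_mul' dl dW) (mul_ne_zero hl.ne' hW)
    have d3 := diff_div' (d2.add_const 8) (d1.add_const 8) m.ne'
    exact (diff_mul' (dz.add_const 8) d3).const_add (-8)
  have dY : DifferentiableAt ℝ (fun q : R3 => Yc φ (q 0) (q 1) (q 2)) p := by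
    unfold Yc
    exact (dl.mul dW).add (diff_max dZ.neg (neg_ne_zero.2 (Zc_ne h hp hz hW hl)))
  rw [differentiableAt_euclidean]
  intro i
  fin_cases i
  · have := diff_mul' dl dx
    simpa only [Fmap, Fin.zero_eta, mk3_0] using this
  · have := diff_mul' (diff_div' dy (dy.abs hy) (abs_ne_zero.2 hy)) dY
    simpa only [Fmap, Fin.mk_one, mk3_1] using this
  · simpa only [Fmap, Fin.reduceFinMk, mk3_2] using dZ

lemma image_eq {φ ψ : ℝ → ℝ} {L M : ℝ} (h : Good φ L) (k : Good ψ M)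
    (inv' : ∀ s, 0 ≤ s → s ≤ 3 → φ (ψ s) = s) (S T : Set R3) (A B : ℝ → Prop)
    (hS : ∀ p, p ∈ S ↔ A (Rc (p 0) (p 1) (p 2)) ∧ -8 ≤ p 2 ∧ p 2 ≤ 8)
    (hT : ∀ p, p ∈ T ↔ B (Rc (p 0) (p 1) (p 2)) ∧ -8 ≤ p 2 ∧ p 2 ≤ 8)
    (A3 : ∀ s, A s → s ≤ 3) (B3 : ∀ s, B s → s ≤ 3)
    (AB : ∀ s, 0 ≤ s → A s → B (φ s)) (BA : ∀ s, 0 ≤ s → B s → A (ψ s)) :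
    Fmap φ '' S = T := by
  ext q
  constructor
  · rintro ⟨p, hp, rfl⟩
    rw [hS] at hp
    have d : Dom (p 0) (p 1) (p 2) := ⟨A3 _ hp.1, hp.2.1, hp.2.2⟩
    have nd := newDom h d
    have nR := newR h d
    rw [hT]
    simp only [Fmap, mk3_0, mk3_1, mk3_2]
    rw [nR]
    exact ⟨AB _ (Rc_nonneg _ _ _) hp.1, nd.lo, nd.hi⟩
  · intro hq
    rw [hT] at hq
    have d : Dom (q 0) (q 1) (q 2) := ⟨B3 _ hq.1, hq.2.1, hq.2.2⟩
    refine ⟨Fmap ψ q, ?_, inverse k h inv' d⟩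
    have nd := newDom k d
    have nR := newR k d
    rw [hS]
    simp only [Fmap, mk3_0, mk3_1, mk3_2]
    rw [nR]
    exact ⟨BA _ (Rc_nonneg _ _ _) hq.1, nd.lo, nd.hi⟩

/-- Stretching profile. -/
def phi (δ s : ℝ) : ℝ := if s ≤ δ then 2 / δ * s else 2 + (s - δ) / (3 - δ)

/-- Inverse profile. -/
def psi (δ s : ℝ) : ℝ := if s ≤ 2 then δ / 2 * s else δ + (s - 2) * (3 - δ)

lemma lip_of_le {φ : ℝ → ℝ} {L : ℝ}
    (h : ∀ s t, 0 ≤ s → s ≤ t → t ≤ 3 → 0 ≤ φ t - φ s ∧ φ t - φ s ≤ L * (t - s)) :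
    ∀ s t, 0 ≤ s → s ≤ 3 → 0 ≤ t → t ≤ 3 → |φ s - φ t| ≤ L * |s - t| := by
  intro s t h0 h3 k0 k3
  rcases le_total s t with hst | hst
  · obtain ⟨a, b⟩ := h s t h0 hst k3
    rw [abs_sub_comm, abs_sub_comm s, abs_of_nonneg a, abs_of_nonneg (by linarith)]
    exact b
  · obtain ⟨a, b⟩ := h t s k0 hst h3
    rw [abs_of_nonneg a, abs_of_nonneg (by linarith)]
    exact b

lemma phi_incr {δ : ℝ} (h0 : 0 < δ) (h1 : δ ≤ 1) (s t : ℝ) (hst : s ≤ t) :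
    0 ≤ phi δ t - phi δ s ∧ phi δ t - phi δ s ≤ 2 / δ * (t - s) := by
  have k : 2 ≤ 2 / δ := by rw [le_div_iff₀ h0]; linarith
  have e : 2 / δ * δ = 2 := div_mul_cancel₀ _ h0.ne'
  have c0 : 0 < (3 - δ)⁻¹ := inv_pos.2 (by linarith)
  have c1 : (3 - δ)⁻¹ ≤ 1 := inv_le_one_of_one_le₀ (by linarith)
  unfold phi
  simp only [div_eq_mul_inv _ (3 - δ)]
  generalize (3 - δ)⁻¹ = c at *
  generalize 2 / δ = K at *
  split_ifs with a b b
  · constructor <;> nlinarith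
  · linarith
  · push Not at a
    constructor <;> nlinarith [mul_nonneg (sub_nonneg.2 a.le) c0.le,
      mul_le_mul_of_nonneg_left c1 (sub_nonneg.2 a.le), mul_nonneg (sub_nonneg.2 b) (by linarith : 0 ≤ K),
      mul_nonneg (sub_nonneg.2 a.le) (by linarith : 0 ≤ K - 2)]
  · have p := sub_nonneg.2 hst
    constructor <;> nlinarith [mul_nonneg p c0.le, mul_le_mul_of_nonneg_left c1 p,
      mul_nonneg p (by linarith : 0 ≤ K - 2)]

lemma psi_incr {δ : ℝ} (h0 : 0 < δ) (h1 : δ ≤ 1) (s t : ℝ) (hst : s ≤ t) :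
    0 ≤ psi δ t - psi δ s ∧ psi δ t - psi δ s ≤ 3 * (t - s) := by
  unfold psi
  have p := sub_nonneg.2 hst
  split_ifs with a b b
  · constructor <;> nlinarith
  · linarith
  · push Not at a
    have q := sub_nonneg.2 a.le
    have r := sub_nonneg.2 b
    constructor <;> nlinarith [mul_nonneg q h0.le, mul_nonneg r h0.le,
      mul_nonneg q (by linarith : 0 ≤ 1 - δ), mul_nonneg r (by linarith : 0 ≤ 1 - δ)]
  · constructor <;> nlinarith

lemma phi_good {δ : ℝ} (h0 : 0 < δ) (h1 : δ ≤ 1) : Good (phi δ) (2 / δ) := by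
  have three : phi δ 3 = 3 := by
    rw [phi, if_neg (by linarith), div_self (by linarith)]; norm_num
  refine ⟨?_, three, ?_, ?_, ?_, ?_⟩
  · rw [phi, if_pos h0.le, mul_zero]
  · rw [le_div_iff₀ h0]; linarith
  · intro s s0 s3
    unfold phi
    split_ifs with a
    · positivity
    · push Not at a
      have : 0 ≤ (s - δ) / (3 - δ) := div_nonneg (by linarith) (by linarith)
      linarith
  · intro s _ s3
    have := (phi_incr h0 h1 s 3 s3).1
    linarith
  · exact lip_of_le fun s t _ hst _ => phi_incr h0 h1 s t hst

lemma psi_good {δ : ℝ} (h0 : 0 < δ) (h1 : δ ≤ 1) : Good (psi δ) 3 := by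
  have three : psi δ 3 = 3 := by
    rw [psi, if_neg (by linarith)]; ring
  refine ⟨?_, three, by norm_num, ?_, ?_, ?_⟩
  · rw [psi, if_pos (by norm_num), mul_zero]
  · intro s s0 s3
    unfold psi
    split_ifs with a
    · positivity
    · push Not at a
      have : 0 ≤ (s - 2) * (3 - δ) := mul_nonneg (by linarith) (by linarith)
      linarith
  · intro s _ s3
    have := (psi_incr h0 h1 s 3 s3).1
    linarith
  · exact lip_of_le fun s t _ hst _ => psi_incr h0 h1 s t hst

lemma psi_phi {δ : ℝ} (h0 : 0 < δ) (h1 : δ ≤ 1) (s : ℝ) : psi δ (phi δ s) = s := by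
  have e : (3 - δ) ≠ 0 := by linarith
  by_cases a : s ≤ δ
  · have : 2 / δ * s ≤ 2 := by rw [div_mul_eq_mul_div, div_le_iff₀ h0]; linarith
    rw [phi, if_pos a, psi, if_pos this]
    field_simp
  · push Not at a
    have : 0 < (s - δ) / (3 - δ) := div_pos (by linarith) (by linarith)
    rw [phi, if_neg (not_le.2 a), psi, if_neg (by linarith)]
    field_simp
    ring

lemma phi_psi {δ : ℝ} (h0 : 0 < δ) (h1 : δ ≤ 1) (s : ℝ) : phi δ (psi δ s) = s := by
  have e : (3 - δ) ≠ 0 := by linarith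
  by_cases a : s ≤ 2
  · rw [psi, if_pos a, phi, if_pos (by nlinarith)]
    field_simp
  · push Not at a
    have : 0 < (s - 2) * (3 - δ) := mul_pos (by linarith) (by linarith)
    rw [psi, if_neg (not_le.2 a), phi, if_neg (by linarith)]
    field_simp
    ring

lemma phi_diff {δ : ℝ} (s : ℝ) (hs : s ≠ δ) : DifferentiableAt ℝ (phi δ) s := by
  rcases hs.lt_or_gt with h | h
  · have : phi δ =ᶠ[nhds s] fun s => 2 / δ * s := by
      filter_upwards [Iio_mem_nhds h] with t ht
      rw [phi, if_pos (le_of_lt ht)]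
    rw [this.differentiableAt_iff]
    fun_prop
  · have : phi δ =ᶠ[nhds s] fun s => 2 + (s - δ) / (3 - δ) := by
      filter_upwards [Ioi_mem_nhds h] with t ht
      rw [phi, if_neg (not_le.2 ht)]
    rw [this.differentiableAt_iff]
    fun_prop


end

noncomputable section

/-- Lemma `dependonn`.
For every constant `a ≥ 1` there is a constant `C₃ > 1` such that for every positive
integer `n` there is a piecewise smooth homeomorphism
`f₃ : (P(3), P(1/(100an)), G) → (P(3), P(2), G)` with
(1) `f₃` a `(C₃·n)`-Lipschitz map, (2) `f₃⁻¹` a `C₃`-Lipschitz map, and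
(3) `f₃ = id` on `∂_ver P(3)`. -/
theorem exists_radial_stretch (a : ℝ) (ha : 1 ≤ a) :
    ∃ C₃ : ℝ, 1 < C₃ ∧ ∀ n : ℕ, 0 < n →
      ∃ f₃ : R3 → R3,
        Set.BijOn f₃ (Pset 3) (Pset 3) ∧
        f₃ '' (Pset (1 / (100 * a * (n : ℝ)))) = Pset 2 ∧
        f₃ '' Ggraph = Ggraph ∧
        -- `f₃` is piecewise smooth: differentiable away from a closed nowhere dense set
        (∃ Z : Set R3, IsClosed Z ∧ interior Z = ∅ ∧ DifferentiableOn ℝ f₃ (Pset 3 \ Z)) ∧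
        (∀ u ∈ Pset 3, ∀ v ∈ Pset 3, dist (f₃ u) (f₃ v) ≤ (C₃ * (n : ℝ)) * dist u v) ∧
        (∀ u ∈ Pset 3, ∀ v ∈ Pset 3, dist u v ≤ C₃ * dist (f₃ u) (f₃ v)) ∧
        (∀ p ∈ verBoundary, f₃ p = p) := by
  refine ⟨20000 * a, by linarith, fun n hn => ?_⟩
  have hn1 : (1 : ℝ) ≤ n := by exact_mod_cast hn
  have han : 1 ≤ a * n := by nlinarith
  set δ : ℝ := 1 / (100 * a * (n : ℝ)) with hδ
  have h0 : 0 < δ := by positivity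
  have h1 : δ ≤ 1 := by
    rw [hδ, div_le_one (by positivity)]; nlinarith
  have hL : 2 / δ = 200 * (a * n) := by
    rw [hδ]; field_simp; norm_num
  have g := phi_good h0 h1
  have k := psi_good h0 h1
  have i1 : ∀ s, 0 ≤ s → s ≤ 3 → psi δ (phi δ s) = s := fun s _ _ => psi_phi h0 h1 s
  have i2 : ∀ s, 0 ≤ s → s ≤ 3 → phi δ (psi δ s) = s := fun s _ _ => phi_psi h0 h1 s
  have e1 : phi δ δ = 2 := by
    rw [phi, if_pos le_rfl, div_mul_cancel₀ _ h0.ne']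
  have e2 : psi δ 2 = δ := by
    rw [psi, if_pos le_rfl]; ring
  have mapsP : ∀ p ∈ Pset 3, Fmap (phi δ) p ∈ Pset 3 := by
    intro p hp
    rw [Dom_iff] at hp ⊢
    simpa only [Fmap, mk3_0, mk3_1, mk3_2] using newDom g hp
  refine ⟨Fmap (phi δ), ⟨mapsP, ?_, ?_⟩, ?_, ?_, ?_, ?_, ?_, ?_⟩
  · intro u hu v hv huv
    rw [← inverse g k i1 ((Dom_iff u).1 hu), huv, inverse g k i1 ((Dom_iff v).1 hv)]
  · have : Fmap (phi δ) '' Pset 3 = Pset 3 :=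
      image_eq g k i2 _ _ (· ≤ 3) (· ≤ 3) (Pset_iff (by norm_num)) (Pset_iff (by norm_num))
        (fun _ h => h) (fun _ h => h) (fun s => g.le3 s) (fun s => k.le3 s)
    exact this.ge
  · refine image_eq g k i2 _ _ (· ≤ δ) (· ≤ 2) (Pset_iff h0.le) (Pset_iff (by norm_num))
      (fun _ h => by linarith) (fun _ h => by linarith) (fun s _ h => ?_) (fun s _ h => ?_)
    · have := (phi_incr h0 h1 s δ h).1
      linarith
    · have := (psi_incr h0 h1 s 2 h).1
      linarith
  · exact image_eq g k i2 _ _ (· = 0) (· = 0) Ggraph_iff Ggraph_iff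
      (fun _ h => by linarith) (fun _ h => by linarith) (fun s _ h => by rw [h]; exact g.zero)
      (fun s _ h => by rw [h]; exact k.zero)
  · exact ⟨Zex δ, (Zex_closed_empty δ).1, (Zex_closed_empty δ).2, diff_F g phi_diff⟩
  · intro u hu v hv
    have := lip_F g ((Dom_iff u).1 hu) ((Dom_iff v).1 hv)
    rw [hL] at this
    linarith
  · intro u hu v hv
    have := lip_F k ((Dom_iff _).1 (mapsP u hu)) ((Dom_iff _).1 (mapsP v hv))
    rw [inverse g k i1 ((Dom_iff u).1 hu), inverse g k i1 ((Dom_iff v).1 hv)] at this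
    refine this.trans (mul_le_mul_of_nonneg_right (by linarith) dist_nonneg)
  · intro p hp
    exact fix_F g (ver_R hp)

end
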